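/- Let H be a complex Hilbert space and let K be a compact linear operator on H. Then K is not Li-Yorke chaotic (as a dynamical system on H with metric d(x,y) = ‖x − y‖). -/

import Mathlib

open Filter Topology MeasureTheory
open scoped Classical ENNReal

noncomputable def distFreq {X : Type*} [MetricSpace X] (f : X → X) (x y : X) (τ : ℝ) (n : ℕ) : ℝ :=
  (((Finset.range n).filter fun i => dist (f^[i] x) (f^[i] y) < τ).card : ℝ) / n

def DistributionallyChaoticPair {X : Type*} [MetricSpace X] (f : X → X) (x y : X) : Prop :=
  (∀ τ : ℝ, 0 < τ → Filter.limsup (distFreq f x y τ) Filter.atTop = 1) ∧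
  (∃ ε : ℝ, 0 < ε ∧ Filter.liminf (distFreq f x y ε) Filter.atTop = 0)

def DistributionallyChaotic {X : Type*} [MetricSpace X] (f : X → X) : Prop :=
  ∃ Λ : Set X, ¬Λ.Countable ∧
    ∀ x ∈ Λ, ∀ y ∈ Λ, x ≠ y → DistributionallyChaoticPair f x y

def LiYorkePair {X : Type*} [MetricSpace X] (f : X → X) (x y : X) : Prop :=
  0 < Filter.limsup (fun n => edist (f^[n] x) (f^[n] y)) Filter.atTop ∧
  Filter.liminf (fun n => edist (f^[n] x) (f^[n] y)) Filter.atTop = 0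

def LiYorkeChaotic {X : Type*} [MetricSpace X] (f : X → X) : Prop :=
  ∃ Γ : Set X, ¬Γ.Countable ∧ ∀ x ∈ Γ, ∀ y ∈ Γ, x ≠ y → LiYorkePair f x y

def NormUnimodal {X : Type*} [NormedAddCommGroup X] [NormedSpace ℂ X] (T : X →L[ℂ] X) : Prop :=
  ∃ r : ℝ, 1 < r ∧ ∀ m : ℕ, ∃ x : X, x ≠ 0 ∧
    Filter.Tendsto (fun k => ‖(T ^ k) x‖) Filter.atTop (nhds 0) ∧
    ∀ i : ℕ, 1 ≤ i → i ≤ m → r ^ i * ‖x‖ ≤ ‖(T ^ i) x‖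

/-!
If `0` is in the closure of the orbit of `x` under a compact operator `K`, then the orbit tends to
`0`. To see this, restrict `K` to the closed span of the orbit of `x`. By Schauder's theorem and
the Fredholm alternative, a spectral value `μ` with `1 ≤ ‖μ‖` is an eigenvalue of the dual
operator, with an eigenfunctional `φ ≠ 0`. From `φ (K^[n] x) = μ ^ n * φ x` and the hypothesis on
the orbit, `φ x = 0`; so `φ` vanishes on the whole orbit, hence everywhere, a contradiction. Thus
the spectral radius is less than `1` and the powers of `K` tend to `0`. Applied to a difference
`x - y`, this shows that the distance between two orbits tends to `0` as soon as its lower limit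
is `0`.
-/

open Module End Set Metric

theorem tendstoUniformlyOn_of_equicontinuousOn {ι X α : Type*} [TopologicalSpace X]
    [UniformSpace α] {F : ι → X → α} {f : X → α} {l : Filter ι} {C : Set X} (hC : IsCompact C)
    (hF : EquicontinuousOn F C) (h : ∀ x ∈ C, Tendsto (F · x) l (𝓝 (f x))) :
    TendstoUniformlyOn F f l C := by
  have hpi : Tendsto ((⋃₀ {C}).domRestrict ∘ F) l (𝓝 ((⋃₀ {C}).domRestrict f)) :=
    tendsto_pi_nhds.2 fun x ↦ h x ((sUnion_singleton C).subset x.2)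
  exact UniformOnFun.tendsto_iff_tendstoUniformlyOn.1
    ((EquicontinuousOn.tendsto_uniformOnFun_iff_pi' (by simpa using hC) (by simpa using hF) l f).2
      hpi) C rfl

section Schauder

variable {𝕜 E F : Type*} [NontriviallyNormedField 𝕜] [SeminormedAddCommGroup E] [NormedSpace 𝕜 E]
  [SeminormedAddCommGroup F] [NormedSpace 𝕜 F]

theorem continuousOn_precomp_weakDual_closedBall {T : E →L[𝕜] F} (hT : IsCompactOperator T)
    (r : ℝ) :
    ContinuousOn (fun ψ : WeakDual 𝕜 F ↦ T.precomp 𝕜 (WeakDual.toStrongDual ψ))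
      (WeakDual.toStrongDual ⁻¹' closedBall 0 r) := by
  rw [continuousOn_iff_continuous_domRestrict,
    ContinuousLinearMap.isUniformEmbedding_toUniformOnFun.isEmbedding.continuous_iff,
    continuous_iff_continuousAt]
  intro ψ₀
  refine UniformOnFun.tendsto_iff_tendstoUniformlyOn.2 fun S hS ↦ ?_
  obtain ⟨C, hC, hTS⟩ :=
    IsCompactOperator.image_subset_compact_of_isVonNBounded (f := T.toLinearMap) hT hS
  let B := WeakDual.toStrongDual ⁻¹' closedBall (0 : StrongDual 𝕜 F) r
  have equicontinuous : Equicontinuous fun ψ : B ↦ (ψ.1 : F → 𝕜) := by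
    refine (LipschitzWith.uniformEquicontinuous _ r.toNNReal fun ψ ↦ ?_).equicontinuous
    refine (WeakDual.toStrongDual ψ.1).lipschitz.weaken ?_
    exact NNReal.le_toNNReal_of_coe_le (mem_closedBall_zero_iff.1 ψ.2)
  have pointwise (y : F) : Tendsto (fun ψ : B ↦ ψ.1 y) (𝓝 ψ₀) (𝓝 (ψ₀.1 y)) :=
    ((WeakDual.eval_continuous y).comp continuous_subtype_val).tendsto ψ₀
  have uniform_on_C : TendstoUniformlyOn (fun ψ : B ↦ (ψ.1 : F → 𝕜)) ψ₀.1 (𝓝 ψ₀) C :=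
    tendstoUniformlyOn_of_equicontinuousOn hC (equicontinuous.equicontinuousOn C)
      fun y _ ↦ pointwise y
  exact (uniform_on_C.comp T).mono fun x hx ↦ hTS ⟨x, hx, rfl⟩

theorem isCompactOperator_precomp [ProperSpace 𝕜] {T : E →L[𝕜] F} (hT : IsCompactOperator T) :
    IsCompactOperator (T.precomp 𝕜 : StrongDual 𝕜 F →L[𝕜] StrongDual 𝕜 E) :=
  ⟨_, (WeakDual.isCompact_closedBall 0 1).image_of_continuousOn
      (continuousOn_precomp_weakDual_closedBall hT 1),
    mem_of_superset (closedBall_mem_nhds 0 one_pos) fun ψ hψ ↦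
      ⟨StrongDual.toWeakDual ψ, hψ, rfl⟩⟩

end Schauder

theorem apply_iterate_eq_pow_mul {M α : Type*} [Monoid M] {f : α → α} {φ : α → M} {c : M}
    (h : ∀ v, φ (f v) = c * φ v) (n : ℕ) (v : α) : φ (f^[n] v) = c ^ n * φ v := by
  simpa only [mul_left_iterate] using Function.Semiconj.iterate_right (f := φ) h n v

theorem apply_eq_zero_of_zero_mem_closure_orbit {𝕜 E : Type*} [NontriviallyNormedField 𝕜]
    [SeminormedAddCommGroup E] [NormedSpace 𝕜 E] {f : E → E} {φ : StrongDual 𝕜 E} {μ : 𝕜}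
    (hφ : ∀ v, φ (f v) = μ * φ v) (hμ : 1 ≤ ‖μ‖) {x : E}
    (hx : 0 ∈ closure (range fun n ↦ f^[n] x)) : φ x = 0 := by
  have hclosed : IsClosed {v | ‖φ x‖ ≤ ‖φ v‖} := isClosed_le continuous_const (by fun_prop)
  have horbit : range (fun n ↦ f^[n] x) ⊆ {v | ‖φ x‖ ≤ ‖φ v‖} := by
    rintro _ ⟨n, rfl⟩
    rw [mem_ofPred_eq, apply_iterate_eq_pow_mul hφ, norm_mul, norm_pow]
    exact le_mul_of_one_le_left (norm_nonneg _) (one_le_pow₀ hμ)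
  have hnorm : ‖φ x‖ ≤ ‖φ 0‖ := closure_minimal horbit hclosed hx
  simpa using hnorm

section DualEigenvalue

variable {𝕜 E : Type*} [NontriviallyNormedField 𝕜] [ProperSpace 𝕜] [NormedAddCommGroup E]
  [NormedSpace 𝕜 E] [SeparatingDual 𝕜 E] [CompleteSpace E] {T : E →L[𝕜] E} {μ : 𝕜}

theorem hasEigenvalue_precomp_of_mem_spectrum (hT : IsCompactOperator T) (hμ : μ ≠ 0)
    (h : μ ∈ spectrum 𝕜 T) :
    HasEigenvalue (T.precomp 𝕜 : StrongDual 𝕜 E →L[𝕜] StrongDual 𝕜 E).toLinearMap μ := by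
  obtain ⟨x, hx⟩ := ((hT.hasEigenvalue_iff_mem_spectrum hμ).2 h).exists_hasEigenvector
  -- Every functional in the range of `μ - T.precomp 𝕜` vanishes at the eigenvector `x`.
  refine ((isCompactOperator_precomp hT).hasEigenvalue_iff_mem_spectrum hμ).2 fun hunit ↦ ?_
  obtain ⟨φ, hφ⟩ := SeparatingDual.exists_ne_zero (R := 𝕜) hx.2
  obtain ⟨ψ, rfl⟩ := (ContinuousLinearMap.isUnit_iff_bijective.1 hunit).surjective φ
  have hTx : T x = μ • x := hx.apply_eq_smul
  exact hφ (by simp [hTx])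

theorem norm_lt_one_of_mem_spectrum_of_cyclic (hT : IsCompactOperator T) {x : E}
    (hcyclic : Dense (Submodule.span 𝕜 (range fun n ↦ T^[n] x) : Set E))
    (hx : 0 ∈ closure (range fun n ↦ T^[n] x)) (hμ : μ ∈ spectrum 𝕜 T) : ‖μ‖ < 1 := by
  by_contra! hμ_norm
  have hμ0 : μ ≠ 0 := norm_pos_iff.1 (one_pos.trans_le hμ_norm)
  obtain ⟨φ, hφ⟩ := (hasEigenvalue_precomp_of_mem_spectrum hT hμ0 hμ).exists_hasEigenvector
  have hφT (v : E) : φ (T v) = μ * φ v := DFunLike.congr_fun hφ.apply_eq_smul v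
  have hφx : φ x = 0 := apply_eq_zero_of_zero_mem_closure_orbit hφT hμ_norm hx
  refine hφ.2 (ContinuousLinearMap.ext_on hcyclic ?_)
  rintro _ ⟨n, rfl⟩
  simp [apply_iterate_eq_pow_mul hφT, hφx]

end DualEigenvalue

theorem tendsto_pow_nhds_zero_of_spectralRadius_lt_one {A : Type*} [NormedRing A]
    [NormedAlgebra ℂ A] [CompleteSpace A] {a : A} (ha : spectralRadius ℂ a < 1) :
    Tendsto (fun n : ℕ ↦ a ^ n) atTop (𝓝 0) := by
  obtain ⟨r, har, hr⟩ := ENNReal.lt_iff_exists_nnreal_btwn.1 ha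
  have hroot := (spectrum.pow_nnnorm_pow_one_div_tendsto_nhds_spectralRadius a).eventually_lt_const
    har
  refine squeeze_zero_norm' ?_
    (tendsto_pow_atTop_nhds_zero_of_lt_one r.2 (by exact_mod_cast hr))
  filter_upwards [hroot, eventually_gt_atTop 0] with n hn hn0
  rw [one_div, ENNReal.rpow_inv_lt_iff (by positivity), ENNReal.rpow_natCast] at hn
  exact_mod_cast hn.le

section Cyclic

variable {R E : Type*} [Semiring R] [AddCommMonoid E] [TopologicalSpace E] [Module R E]

theorem coe_iterate_restrict {T : E →L[R] E} {p : Submodule R E} (hp : MapsTo T p p)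
    (n : ℕ) (v : p) :
    ((T.restrict hp)^[n] v : E) = T^[n] v :=
  Function.Semiconj.iterate_right (f := Subtype.val) (fun _ ↦ rfl) n v

variable [ContinuousAdd E] [ContinuousConstSMul R E]

/-- The smallest closed invariant subspace of `T` containing `x`, that is, the closed linear span
of the orbit of `x`. -/
def cyclicSubspace (T : E →L[R] E) (x : E) : Submodule R E :=
  (Submodule.span R (range fun n ↦ T^[n] x)).topologicalClosure

theorem isClosed_cyclicSubspace (T : E →L[R] E) (x : E) :
    IsClosed (cyclicSubspace T x : Set E) :=
  Submodule.isClosed_topologicalClosure _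

theorem mem_cyclicSubspace (T : E →L[R] E) (x : E) : x ∈ cyclicSubspace T x :=
  Submodule.le_topologicalClosure _ (Submodule.subset_span ⟨0, rfl⟩)

theorem mapsTo_cyclicSubspace (T : E →L[R] E) (x : E) :
    MapsTo T (cyclicSubspace T x) (cyclicSubspace T x) := by
  refine MapsTo.closure (fun v hv ↦ ?_) T.continuous
  refine Submodule.span_le (p := (Submodule.span R (range fun n ↦ T^[n] x)).comap T.toLinearMap).2
    ?_ hv
  rintro _ ⟨n, rfl⟩
  exact Submodule.subset_span ⟨n + 1, Function.iterate_succ_apply' T n x⟩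

theorem dense_span_orbit_restrict_cyclicSubspace (T : E →L[R] E) (x : E) :
    Dense (Submodule.span R (range fun n ↦ (T.restrict (mapsTo_cyclicSubspace T x))^[n]
      ⟨x, mem_cyclicSubspace T x⟩) : Set (cyclicSubspace T x)) := by
  have himage : (↑) '' range (fun n ↦ (T.restrict (mapsTo_cyclicSubspace T x))^[n]
      ⟨x, mem_cyclicSubspace T x⟩) = range fun n ↦ T^[n] x := by
    simp only [← range_comp, Function.comp_def, coe_iterate_restrict]
  refine Subtype.dense_iff.2 ?_
  rw [← Submodule.coe_subtype, ← Submodule.map_coe, Submodule.map_span, Submodule.coe_subtype,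
    himage]
  exact Subset.rfl

end Cyclic

section Complex

variable {E : Type*} [NormedAddCommGroup E] [NormedSpace ℂ E] {T : E →L[ℂ] E}

theorem tendsto_iterate_of_spectrum_subset_ball [CompleteSpace E]
    (hT : spectrum ℂ T ⊆ ball 0 1) (x : E) :
    Tendsto (fun n ↦ T^[n] x) atTop (𝓝 0) := by
  have hradius : spectralRadius ℂ T < 1 := by
    rcases subsingleton_or_nontrivial E with hE | hE
    · simp
    · exact spectrum.spectralRadius_lt_of_forall_lt T fun μ hμ ↦ mem_ball_zero_iff.1 (hT hμ)
  have hpow : Tendsto (fun n ↦ (T ^ n) x) atTop (𝓝 0) :=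
    ((ContinuousLinearMap.apply ℂ E x).continuous.tendsto' 0 0 rfl).comp
      (tendsto_pow_nhds_zero_of_spectralRadius_lt_one hradius)
  simpa only [FunLike.coe_pow_eq_iterate] using hpow

theorem tendsto_iterate_of_zero_mem_closure_orbit_of_complete [CompleteSpace E]
    (hT : IsCompactOperator T) {x : E} (hx : 0 ∈ closure (range fun n ↦ T^[n] x)) :
    Tendsto (fun n ↦ T^[n] x) atTop (𝓝 0) := by
  let M := cyclicSubspace T x
  have hM : IsClosed (M : Set E) := isClosed_cyclicSubspace T x
  have : CompleteSpace M := hM.completeSpace_coe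
  let S : M →L[ℂ] M := T.restrict (mapsTo_cyclicSubspace T x)
  let x' : M := ⟨x, mem_cyclicSubspace T x⟩
  have hS : IsCompactOperator S := hT.restrict (f := T.toLinearMap) (mapsTo_cyclicSubspace T x) hM
  have hx' : 0 ∈ closure (range fun n ↦ S^[n] x') := by
    rw [closure_subtype, ← range_comp]
    simpa only [Function.comp_def, S, coe_iterate_restrict, x', ZeroMemClass.coe_zero] using hx
  have hlim : Tendsto (fun n ↦ S^[n] x') atTop (𝓝 0) :=
    tendsto_iterate_of_spectrum_subset_ball (fun μ hμ ↦ mem_ball_zero_iff.2 <|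
      norm_lt_one_of_mem_spectrum_of_cyclic hS (dense_span_orbit_restrict_cyclicSubspace T x) hx'
        hμ) x'
  simpa only [Function.comp_def, S, coe_iterate_restrict, x', ZeroMemClass.coe_zero] using
    (continuous_subtype_val.tendsto (0 : M)).comp hlim

end Complex

theorem isCompactOperator_completion {𝕜 E F : Type*} [NormedField 𝕜]
    [SeminormedAddCommGroup E] [NormedSpace 𝕜 E] [SeminormedAddCommGroup F] [NormedSpace 𝕜 F]
    {T : E →L[𝕜] F} (hT : IsCompactOperator T) :
    IsCompactOperator T.completion := by
  obtain ⟨C, hC, hTC⟩ := hT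
  have hC' : IsCompact ((↑) '' C : Set (UniformSpace.Completion F)) :=
    hC.image (UniformSpace.Completion.continuous_coe F)
  refine ⟨_, hC', mem_of_superset
    (UniformSpace.Completion.isDenseInducing_coe.closure_image_mem_nhds hTC) ?_⟩
  refine closure_minimal ?_ (hC'.isClosed.preimage T.completion.continuous)
  rintro _ ⟨v, hv, rfl⟩
  exact ⟨T v, hv, (T.completion_apply_coe v).symm⟩

theorem tendsto_iterate_of_zero_mem_closure_orbit {E : Type*} [SeminormedAddCommGroup E]
    [NormedSpace ℂ E] {T : E →L[ℂ] E} (hT : IsCompactOperator T)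
    {x : E} (hx : 0 ∈ closure (range fun n ↦ T^[n] x)) :
    Tendsto (fun n ↦ T^[n] x) atTop (𝓝 0) := by
  have orbit_coe (n : ℕ) :
      T.completion^[n] x = ((T^[n] x : E) : UniformSpace.Completion E) :=
    (Function.Semiconj.iterate_right (fun v ↦ (T.completion_apply_coe v).symm) n x).symm
  have isInducing_coe := (UniformSpace.Completion.isUniformInducing_coe E).isInducing
  rw [isInducing_coe.tendsto_nhds_iff]
  rw [isInducing_coe.closure_eq_preimage_closure_image, mem_preimage, ← range_comp] at hx
  simp only [Function.comp_def, ← orbit_coe, UniformSpace.Completion.coe_zero] at hx ⊢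
  exact tendsto_iterate_of_zero_mem_closure_orbit_of_complete (isCompactOperator_completion hT) hx

theorem LiYorkePair.frequently_edist_lt {X : Type*} [MetricSpace X] {f : X → X} {x y : X}
    (h : LiYorkePair f x y) {ε : ℝ≥0∞} (hε : 0 < ε) :
    ∃ᶠ n in atTop, edist (f^[n] x) (f^[n] y) < ε :=
  frequently_lt_of_liminf_lt isCobounded_ge_of_top (h.2.trans_lt hε)

theorem LiYorkePair.not_tendsto_edist {X : Type*} [MetricSpace X] {f : X → X} {x y : X}
    (h : LiYorkePair f x y) : ¬ Tendsto (fun n ↦ edist (f^[n] x) (f^[n] y)) atTop (𝓝 0) :=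
  fun hlim ↦ h.1.ne' hlim.limsup_eq

theorem not_liYorkePair_of_isCompactOperator {E : Type*} [NormedAddCommGroup E] [NormedSpace ℂ E]
    {K : E →L[ℂ] E} (hK : IsCompactOperator K) (x y : E) : ¬ LiYorkePair K x y := by
  intro h
  have edist_orbit (n : ℕ) : edist (K^[n] x) (K^[n] y) = ‖K^[n] (x - y)‖ₑ := by
    rw [edist_eq_enorm_sub, iterate_map_sub]
  have hclosure : 0 ∈ closure (range fun n ↦ K^[n] (x - y)) := by
    refine EMetric.mem_closure_iff.2 fun ε hε ↦ ?_
    obtain ⟨n, hn⟩ := (h.frequently_edist_lt hε).exists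
    exact ⟨_, mem_range_self n, by rwa [edist_comm, edist_zero_right, ← edist_orbit]⟩
  have hlim := (tendsto_iterate_of_zero_mem_closure_orbit hK hclosure).enorm
  simp only [enorm_zero, ← edist_orbit] at hlim
  exact h.not_tendsto_edist hlim

theorem LiYorkeChaotic.exists_liYorkePair {X : Type*} [MetricSpace X] {f : X → X}
    (h : LiYorkeChaotic f) : ∃ x y, LiYorkePair f x y := by
  obtain ⟨Γ, hΓ, hpair⟩ := h
  obtain ⟨x, hx, y, hy, hxy⟩ := not_subsingleton_iff.1 (mt Set.Subsingleton.countable hΓ)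
  exact ⟨x, y, hpair x hx y hy hxy⟩

theorem stmt_11_general {E : Type*} [NormedAddCommGroup E] [NormedSpace ℂ E] (K : E →L[ℂ] E)
    (hK : IsCompactOperator K) : ¬ LiYorkeChaotic K := fun h ↦
  have ⟨x, y, hxy⟩ := h.exists_liYorkePair
  not_liYorkePair_of_isCompactOperator hK x y hxy

/-- A compact linear operator on a complex Hilbert space is not
Li-Yorke chaotic. -/
theorem stmt_11 {H : Type*} [NormedAddCommGroup H] [InnerProductSpace ℂ H]
    [CompleteSpace H]
    (K : H →L[ℂ] H) (hK : IsCompactOperator (⇑K)) :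
    ¬ LiYorkeChaotic (fun x => K x) :=
  stmt_11_general K hK
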